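/- For the Baumslag–Solitar presentation ⟨a,b | a²b = ba⟩, there exists an infinite right-reversing sequence starting from b⁻¹ab: in two reversing steps, b⁻¹ab reverses to a·b⁻¹·a·b·a⁻¹, which properly contains b⁻¹ab as a subword, so reversing from b⁻¹ab never terminates with a positive–negative word along at least one reversing sequence. -/

import Mathlib

/-- A congruence on the free monoid of words over `S`: an equivalence relation
compatible with concatenation. -/
def IsCong {S : Type} (r : List S → List S → Prop) : Prop :=
  Equivalence r ∧ ∀ a b c d : List S, r a b → r c d → r (a ++ c) (b ++ d)

/-- `R`-equivalence: the smallest congruence on the free monoid `S*`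
containing the relations `R`. -/
def REquiv {S : Type} (R : List S → List S → Prop) (w w' : List S) : Prop :=
  ∀ r : List S → List S → Prop, IsCong r → (∀ a b, R a b → r a b) → r w w'

/-- The positive word `w` viewed as a signed word. -/
def wpos {S : Type} (w : List S) : List (S ⊕ S) := w.map Sum.inl

/-- The formal inverse `w⁻¹` of a positive word `w`, as a signed word. -/
def wneg {S : Type} (w : List S) : List (S ⊕ S) := (w.map Sum.inr).reverse

/-- One step of right-reversing with respect to `R`: replace a subword `s⁻¹t`
by `v'·v⁻¹` where `s·v' = t·v` is a relation of `R` (in either orientation),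
including the trivial step `s⁻¹s ↷ ε`. -/
def RevStep {S : Type} (R : List S → List S → Prop) (x y : List (S ⊕ S)) : Prop :=
  ∃ (u u' : List (S ⊕ S)) (s t : S) (v v' : List S),
    x = u ++ [Sum.inr s, Sum.inl t] ++ u' ∧
    y = u ++ wpos v' ++ wneg v ++ u' ∧
    (R (s :: v') (t :: v) ∨ R (t :: v) (s :: v') ∨ (s = t ∧ v = [] ∧ v' = []))

/-- Right-reversing: finitely many reversing steps. -/
def Rev {S : Type} (R : List S → List S → Prop) :
    List (S ⊕ S) → List (S ⊕ S) → Prop :=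
  Relation.ReflTransGen (RevStep R)

/-- Completeness of a presentation with respect to right-reversing. -/
def Complete {S : Type} (R : List S → List S → Prop) : Prop :=
  ∀ w w' : List S, REquiv R w w' → Rev R (wneg w ++ wpos w') []


/-- The two generators. -/
inductive L : Type | a | b
open L

/-- The Baumslag–Solitar relation a²b = ba. -/
def R13 : List L → List L → Prop := fun x y => x = [a,a,b] ∧ y = [b,a]

theorem step_one (p q : List (L ⊕ L)) :
    RevStep R13 (p ++ [Sum.inr b, Sum.inl a, Sum.inl b] ++ q)
      (p ++ [Sum.inl a, Sum.inr b, Sum.inr a, Sum.inl b] ++ q) :=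
  ⟨p, [Sum.inl b] ++ q, b, a, [a, b], [a], by simp, by simp [wpos, wneg],
    Or.inr (Or.inl ⟨rfl, rfl⟩)⟩

theorem step_two (p q : List (L ⊕ L)) :
    RevStep R13 (p ++ [Sum.inl a, Sum.inr b, Sum.inr a, Sum.inl b] ++ q)
      (p ++ [Sum.inl a, Sum.inr b, Sum.inl a, Sum.inl b, Sum.inr a] ++ q) :=
  ⟨p ++ [Sum.inl a, Sum.inr b], q, a, b, [a], [a, b], by simp, by simp [wpos, wneg],
    Or.inl ⟨rfl, rfl⟩⟩

/-- For ⟨a,b | a²b = ba⟩, in two right-reversing steps the word b⁻¹ab reverses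
to a·b⁻¹·a·b·a⁻¹, which properly contains b⁻¹ab as a subword; consequently
there is an infinite right-reversing sequence starting from b⁻¹ab. -/
theorem stmt13 :
    (∃ w1 : List (L ⊕ L),
      RevStep R13 [Sum.inr b, Sum.inl a, Sum.inl b] w1 ∧
      RevStep R13 w1 [Sum.inl a, Sum.inr b, Sum.inl a, Sum.inl b, Sum.inr a]) ∧
    (∃ u u' : List (L ⊕ L),
      [Sum.inl a, Sum.inr b, Sum.inl a, Sum.inl b, Sum.inr a] =
        u ++ [Sum.inr b, Sum.inl a, Sum.inl b] ++ u' ∧ (u ≠ [] ∨ u' ≠ [])) ∧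
    (∃ f : ℕ → List (L ⊕ L), f 0 = [Sum.inr b, Sum.inl a, Sum.inl b] ∧
      ∀ n : ℕ, RevStep R13 (f n) (f (n + 1))) := by
  refine ⟨⟨[Sum.inl a, Sum.inr b, Sum.inr a, Sum.inl b], ?_, ?_⟩,
    ⟨[Sum.inl a], [Sum.inr a], rfl, Or.inl (by simp)⟩, ?_⟩
  · simpa using step_one [] []
  · simpa using step_two [] []
  · refine ⟨fun n => List.replicate (n / 2) (Sum.inl a) ++
      (if n % 2 = 0 then [Sum.inr b, Sum.inl a, Sum.inl b]
        else [Sum.inl a, Sum.inr b, Sum.inr a, Sum.inl b]) ++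
      List.replicate (n / 2) (Sum.inr a), by simp, ?_⟩
    intro n
    rcases Nat.mod_two_eq_zero_or_one n with h | h
    · have h1 : (n + 1) / 2 = n / 2 := by omega
      have h2 : (n + 1) % 2 = 1 := by omega
      simp only [h, h1, h2, if_true, one_ne_zero, if_false]
      exact step_one _ _
    · have h1 : (n + 1) / 2 = n / 2 + 1 := by omega
      have h2 : (n + 1) % 2 = 0 := by omega
      simp only [h, h1, h2, if_true, one_ne_zero, if_false]
      convert step_two (List.replicate (n / 2) (Sum.inl a))
        (List.replicate (n / 2) (Sum.inr a)) using 1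
      rw [List.replicate_succ' (a := (Sum.inl a : L ⊕ L)), List.replicate_succ]
      simp
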